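/- arXiv:1909.04484 — 3 statements merged into one kernel-verified Lean document; each statement's English description precedes it below -/
import Mathlib

section
/- If F : ℝ → ℝ is continuous and ε ≥ 0, then the function ψ^ε(β) = 2 + ε F(1/E(β) − 2) is continuous on the interval [2, ∞). -/
/-- The orbit of `1` under the β-map `T_β(x) = βx mod 1`: `t₀ = 1`,
`t_{n+1} = β t_n − ⌊β t_n⌋`. -/
noncomputable def betaOrbit (β : ℝ) : ℕ → ℝ
  | 0 => 1
  | n + 1 => Int.fract (β * betaOrbit β n)

/-- `E(β) = (∑ t_n(β)²/(2βⁿ)) / (∑ t_n(β)/βⁿ)`, the expectation of the unique acim of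
the β-map. -/
noncomputable def Ebeta (β : ℝ) : ℝ :=
  (∑' n : ℕ, (betaOrbit β n) ^ 2 / (2 * β ^ n)) / (∑' n : ℕ, betaOrbit β n / β ^ n)

/-- `ψ^ε(β) = 2 + ε F(1/E(β) − 2)`. -/
noncomputable def psi (ε : ℝ) (F : ℝ → ℝ) (β : ℝ) : ℝ :=
  2 + ε * F (1 / Ebeta β - 2)

/-! Each `t_n` is right-continuous in `β` on `(1, ∞)`, and its left limit at `β` is the `n`-th point
`q_n` of the orbit of `1` under the left-continuous version of the β-map. The two orbits agree until
`t` first vanishes, at time `N` say; from then on `t` stays at `0`, while `q_N = 1`, so `q` is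
`N`-periodic. Hence, for every `g` with `g 0 = 0`,
`∑ g(t_n) / βⁿ = (1 - β⁻ᴺ) ∑ g(q_n) / βⁿ` with a factor independent of `g`. The factor cancels in
the quotient defining `E`, so the left and right limits of `E` at `β` both equal `E(β)`. -/

open Filter Set Topology

section OneSidedProducts

variable {ι R : Type*} [Semiring R] [LinearOrder R] [IsStrictOrderedRing R] [TopologicalSpace R]
  [ContinuousMul R] {l : Filter ι} {f g : ι → R} {a b : R}

lemma tendsto_mul_nhdsGE (hf : Tendsto f l (𝓝[≥] a)) (hg : Tendsto g l (𝓝[≥] b))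
    (ha : 0 ≤ a) (hb : 0 ≤ b) : Tendsto (fun x => f x * g x) l (𝓝[≥] (a * b)) := by
  rw [tendsto_nhdsWithin_iff] at hf hg ⊢
  refine ⟨hf.1.mul hg.1, ?_⟩
  filter_upwards [hf.2, hg.2] with x hfx hgx
  exact mul_le_mul hfx hgx hb (ha.trans hfx)

lemma tendsto_mul_nhdsLT [OrderClosedTopology R] (hf : Tendsto f l (𝓝[<] a))
    (hg : Tendsto g l (𝓝[≤] b)) (ha : 0 < a) (hb : 0 < b) :
    Tendsto (fun x => f x * g x) l (𝓝[<] (a * b)) := by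
  rw [tendsto_nhdsWithin_iff] at hf hg ⊢
  refine ⟨hf.1.mul hg.1, ?_⟩
  filter_upwards [hf.2, hg.2, hf.1.eventually_const_lt ha] with x hfx hgx hpos
  exact (mul_le_mul_of_nonneg_left hgx hpos.le).trans_lt (mul_lt_mul_of_pos_right hfx hb)

end OneSidedProducts

section LeftFract

variable {R : Type*} [Ring R] [LinearOrder R] [FloorRing R]

/-- The left-continuous version of `Int.fract`: it takes the value `1` instead of `0` at
integers. -/
def leftFract (x : R) : R := x - (⌈x⌉ - 1 : ℤ)

variable [IsStrictOrderedRing R]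

lemma leftFract_of_fract_eq_zero {x : R} (hx : Int.fract x = 0) : leftFract x = 1 := by
  obtain ⟨z, rfl⟩ := Int.fract_eq_zero_iff.1 hx
  simp [leftFract]

lemma leftFract_mem_Ioc (x : R) : leftFract x ∈ Ioc 0 1 := by
  rw [leftFract, Int.cast_sub, Int.cast_one]
  exact ⟨sub_pos.2 (sub_lt_iff_lt_add.2 (Int.ceil_lt_add_one x)),
    sub_le_comm.1 (sub_le_sub_right (Int.le_ceil x) 1)⟩

lemma leftFract_eq_fract {x : R} (hx : Int.fract x ≠ 0) : leftFract x = Int.fract x := by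
  rw [leftFract, Int.cast_sub, Int.cast_one, Int.ceil_eq_add_one_sub_fract hx]
  abel

variable [TopologicalSpace R] [OrderClosedTopology R] [IsTopologicalAddGroup R]

lemma tendsto_fract_nhdsGE (x : R) : Tendsto Int.fract (𝓝[≥] x) (𝓝[≥] Int.fract x) := by
  have hsub : Tendsto (fun y => y - (⌊x⌋ : R)) (𝓝[≥] x) (𝓝[≥] Int.fract x) :=
    (continuous_sub_right _).continuousWithinAt.tendsto_nhdsWithin
      fun _ hy => sub_le_sub_right hy _
  refine hsub.congr' ?_
  filter_upwards [tendsto_pure.1 (tendsto_floor_right_pure_floor x)] with y hy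
  rw [Int.fract, hy]

lemma tendsto_fract_nhdsLT (x : R) : Tendsto Int.fract (𝓝[<] x) (𝓝[<] leftFract x) := by
  have hsub : Tendsto (fun y => y - ((⌈x⌉ - 1 : ℤ) : R)) (𝓝[<] x) (𝓝[<] leftFract x) :=
    (continuous_sub_right _).continuousWithinAt.tendsto_nhdsWithin
      fun _ hy => sub_lt_sub_right hy _
  refine hsub.congr' ?_
  filter_upwards [tendsto_pure.1 (tendsto_floor_left_pure_ceil_sub_one x)] with y hy
  rw [Int.fract, hy]

end LeftFract

section DiscountedSum

/-- The discounted sum `∑ aₙ / βⁿ`. When `aₙ = g (tₙ)` for the orbit `t` of `1` and `g 0 = 0`, it is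
the integral of `g'` against the Parry density `h_β`. -/
noncomputable def discountedSum (β : ℝ) (a : ℕ → ℝ) : ℝ := ∑' n, a n / β ^ n

variable {β C : ℝ} {a : ℕ → ℝ}

lemma summable_const_div_pow (hβ : 1 < β) (C : ℝ) : Summable fun n : ℕ => C / β ^ n := by
  simpa only [div_eq_mul_inv, inv_pow] using
    (summable_geometric_of_lt_one (by positivity) (inv_lt_one_of_one_lt₀ hβ)).mul_left C

lemma summable_div_pow_of_bounded (hβ : 1 < β) (ha : ∀ n, ‖a n‖ ≤ C) :
    Summable fun n => a n / β ^ n := by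
  refine (summable_const_div_pow hβ C).of_norm_bounded fun n => ?_
  rw [norm_div, norm_pow, Real.norm_of_nonneg (by positivity : 0 ≤ β)]
  gcongr
  exact ha n

lemma discountedSum_pos (hβ : 1 < β) (hC : ∀ n, ‖a n‖ ≤ C) (ha : ∀ n, 0 ≤ a n) (ha₀ : 0 < a 0) :
    0 < discountedSum β a :=
  (summable_div_pow_of_bounded hβ hC).tsum_pos
    (fun n => div_nonneg (ha n) (by positivity)) 0 (by simpa using ha₀)

lemma tendsto_discountedSum {ι : Type*} {l : Filter ι} {b : ι → ℝ} {u : ι → ℕ → ℝ} (hβ : 1 < β)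
    (hb : Tendsto b l (𝓝 β)) (hu : ∀ n, Tendsto (u · n) l (𝓝 (a n)))
    (hC : ∀ᶠ i in l, ∀ n, ‖u i n‖ ≤ C) :
    Tendsto (fun i => discountedSum (b i) (u i)) l (𝓝 (discountedSum β a)) := by
  obtain ⟨r, hr, hrβ⟩ := exists_between hβ
  refine tendsto_tsum_of_dominated_convergence (summable_const_div_pow hr C)
    (fun n => (hu n).div (hb.pow n) (by positivity)) ?_
  filter_upwards [hC, hb.eventually_const_lt hrβ] with i hi hri n
  rw [norm_div, norm_pow, Real.norm_of_nonneg (by linarith : 0 ≤ b i)]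
  gcongr
  · exact (norm_nonneg _).trans (hi n)
  · exact hi n

lemma exists_norm_le_of_periodic {E : Type*} [SeminormedAddGroup E] {a : ℕ → E} {N : ℕ}
    (hN : 0 < N) (ha : Function.Periodic a N) : ∃ C, ∀ n, ‖a n‖ ≤ C := by
  refine ⟨∑ i ∈ Finset.range N, ‖a i‖, fun n => ?_⟩
  rw [← ha.map_mod_nat n]
  exact Finset.single_le_sum (f := fun i => ‖a i‖) (fun i _ => norm_nonneg _)
    (Finset.mem_range.2 (n.mod_lt hN))

lemma sum_range_div_pow_of_periodic (hβ : 1 < β) {N : ℕ} (hN : 0 < N)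
    (ha : Function.Periodic a N) :
    ∑ i ∈ Finset.range N, a i / β ^ i = (1 - (β ^ N)⁻¹) * discountedSum β a := by
  obtain ⟨C, hC⟩ := exists_norm_le_of_periodic hN ha
  have hsplit := (summable_div_pow_of_bounded hβ hC).sum_add_tsum_nat_add N
  have htail : ∑' i, a (i + N) / β ^ (i + N) = (β ^ N)⁻¹ * discountedSum β a := by
    rw [discountedSum, ← tsum_mul_left]
    refine tsum_congr fun i => ?_
    rw [ha i, pow_add, div_mul_eq_div_div, div_eq_inv_mul]
  rw [htail, ← discountedSum] at hsplit
  linear_combination hsplit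

end DiscountedSum

section Orbits

/-- The quasi-greedy orbit of `1`, i.e. its orbit under the left-continuous version
`x ↦ βx - ⌈βx⌉ + 1` of the β-map. -/
noncomputable def quasiGreedyOrbit (β : ℝ) : ℕ → ℝ
  | 0 => 1
  | n + 1 => leftFract (β * quasiGreedyOrbit β n)

variable {β : ℝ}

lemma betaOrbit_mem_Icc (β : ℝ) : ∀ n, betaOrbit β n ∈ Icc 0 1
  | 0 => right_mem_Icc.2 zero_le_one
  | _ + 1 => ⟨Int.fract_nonneg _, (Int.fract_lt_one _).le⟩

lemma quasiGreedyOrbit_mem_Ioc (β : ℝ) : ∀ n, quasiGreedyOrbit β n ∈ Ioc 0 1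
  | 0 => right_mem_Ioc.2 zero_lt_one
  | _ + 1 => leftFract_mem_Ioc _

lemma tendsto_betaOrbit_nhdsGE (hβ : 0 ≤ β) (n : ℕ) :
    Tendsto (betaOrbit · n) (𝓝[≥] β) (𝓝[≥] betaOrbit β n) := by
  induction n with
  | zero => exact tendsto_const_nhdsWithin self_mem_Ici
  | succ n ih =>
    exact (tendsto_fract_nhdsGE _).comp
      (tendsto_mul_nhdsGE tendsto_id ih hβ (betaOrbit_mem_Icc β n).1)

lemma tendsto_betaOrbit_nhdsLT (hβ : 0 < β) (n : ℕ) :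
    Tendsto (betaOrbit · n) (𝓝[<] β) (𝓝[≤] quasiGreedyOrbit β n) := by
  induction n with
  | zero => exact tendsto_const_nhdsWithin self_mem_Iic
  | succ n ih =>
    exact ((tendsto_fract_nhdsLT _).comp
      (tendsto_mul_nhdsLT tendsto_id ih hβ (quasiGreedyOrbit_mem_Ioc β n).1)).mono_right
        (nhdsWithin_mono _ Iio_subset_Iic_self)

lemma pos_of_betaOrbit_eq_zero {n : ℕ} (hn : betaOrbit β n = 0) : 0 < n :=
  Nat.pos_of_ne_zero fun h => one_ne_zero (h ▸ hn : betaOrbit β 0 = 0)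

lemma betaOrbit_eq_zero_of_le {m n : ℕ} (hmn : m ≤ n) (hm : betaOrbit β m = 0) :
    betaOrbit β n = 0 := by
  induction n, hmn using Nat.le_induction with
  | base => exact hm
  | succ n _ ih => rw [betaOrbit, ih, mul_zero, Int.fract_zero]

lemma quasiGreedyOrbit_eq_betaOrbit {n : ℕ} (hn : betaOrbit β n ≠ 0) :
    quasiGreedyOrbit β n = betaOrbit β n := by
  induction n with
  | zero => rfl
  | succ n ih =>
    have hprev : betaOrbit β n ≠ 0 := mt (betaOrbit_eq_zero_of_le n.le_succ) hn
    rw [quasiGreedyOrbit, ih hprev, betaOrbit, leftFract_eq_fract hn]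

lemma quasiGreedyOrbit_eq_one {N : ℕ} (hN : IsLeast {n | betaOrbit β n = 0} N) :
    quasiGreedyOrbit β N = 1 := by
  cases N with
  | zero => rfl
  | succ M =>
    have hM : betaOrbit β M ≠ 0 := fun h => (hN.2 h).not_gt M.lt_succ_self
    rw [quasiGreedyOrbit, quasiGreedyOrbit_eq_betaOrbit hM, leftFract_of_fract_eq_zero hN.1]

lemma quasiGreedyOrbit_periodic {N : ℕ} (hN : quasiGreedyOrbit β N = 1) :
    Function.Periodic (quasiGreedyOrbit β) N := by
  intro n
  induction n with
  | zero => rw [zero_add, hN, quasiGreedyOrbit]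
  | succ n ih => rw [Nat.add_right_comm, quasiGreedyOrbit, ih, quasiGreedyOrbit]

lemma discountedSum_betaOrbit_of_isLeast (hβ : 1 < β) {N : ℕ}
    (hN : IsLeast {n | betaOrbit β n = 0} N) {g : ℝ → ℝ} (hg : g 0 = 0) :
    discountedSum β (g ∘ betaOrbit β) =
      (1 - (β ^ N)⁻¹) * discountedSum β (g ∘ quasiGreedyOrbit β) := by
  have hperiodic : Function.Periodic (g ∘ quasiGreedyOrbit β) N :=
    (quasiGreedyOrbit_periodic (quasiGreedyOrbit_eq_one hN)).comp g
  calc discountedSum β (g ∘ betaOrbit β)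
      = ∑ n ∈ Finset.range N, g (betaOrbit β n) / β ^ n := by
        refine tsum_eq_sum fun n hn => ?_
        have hNn : N ≤ n := not_lt.1 (mt Finset.mem_range.2 hn)
        rw [Function.comp_apply, betaOrbit_eq_zero_of_le hNn hN.1, hg, zero_div]
    _ = ∑ n ∈ Finset.range N, g (quasiGreedyOrbit β n) / β ^ n := by
        refine Finset.sum_congr rfl fun n hn => ?_
        have hne : betaOrbit β n ≠ 0 := fun h => (hN.2 h).not_gt (Finset.mem_range.1 hn)
        rw [quasiGreedyOrbit_eq_betaOrbit hne]
    _ = _ := sum_range_div_pow_of_periodic hβ (pos_of_betaOrbit_eq_zero hN.1) hperiodic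

lemma exists_discountedSum_betaOrbit_eq_mul (hβ : 1 < β) :
    ∃ c ≠ 0, ∀ g : ℝ → ℝ, g 0 = 0 →
      discountedSum β (g ∘ betaOrbit β) = c * discountedSum β (g ∘ quasiGreedyOrbit β) := by
  classical
  by_cases h : ∃ n, betaOrbit β n = 0
  · have hN := Nat.isLeast_find h
    have hpow : (β ^ Nat.find h)⁻¹ < 1 :=
      inv_lt_one_of_one_lt₀ (one_lt_pow₀ hβ (pos_of_betaOrbit_eq_zero hN.1).ne')
    exact ⟨_, (sub_pos.2 hpow).ne', fun _ => discountedSum_betaOrbit_of_isLeast hβ hN⟩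
  · have heq : quasiGreedyOrbit β = betaOrbit β :=
      funext fun n => quasiGreedyOrbit_eq_betaOrbit (not_exists.1 h n)
    exact ⟨1, one_ne_zero, fun g _ => by rw [heq, one_mul]⟩

end Orbits

section Continuity

variable {β : ℝ} {f g : ℝ → ℝ}

lemma exists_norm_comp_betaOrbit_le (hg : Continuous g) :
    ∃ C, ∀ β n, ‖g (betaOrbit β n)‖ ≤ C := by
  obtain ⟨C, hC⟩ := isCompact_Icc.exists_bound_of_continuousOn hg.continuousOn
  exact ⟨C, fun β n => hC _ (betaOrbit_mem_Icc β n)⟩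

lemma tendsto_discountedSum_comp_betaOrbit {l : Filter ℝ} {q : ℕ → ℝ} (hβ : 1 < β)
    (hl : l ≤ 𝓝 β) (hq : ∀ n, Tendsto (betaOrbit · n) l (𝓝 (q n))) (hg : Continuous g) :
    Tendsto (fun b => discountedSum b (g ∘ betaOrbit b)) l (𝓝 (discountedSum β (g ∘ q))) := by
  obtain ⟨C, hC⟩ := exists_norm_comp_betaOrbit_le hg
  exact tendsto_discountedSum hβ hl (fun n => (hg.tendsto _).comp (hq n)) (.of_forall hC)

theorem continuousAt_discountedSum_div_discountedSum (hβ : 1 < β) (hf : Continuous f)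
    (hg : Continuous g) (hf₀ : f 0 = 0) (hg₀ : g 0 = 0)
    (hne : discountedSum β (g ∘ betaOrbit β) ≠ 0) :
    ContinuousAt (fun b => discountedSum b (f ∘ betaOrbit b) / discountedSum b (g ∘ betaOrbit b))
      β := by
  have hβ₀ : 0 < β := one_pos.trans hβ
  rw [ContinuousAt, ← nhdsLT_sup_nhdsGE, tendsto_sup]
  constructor
  · obtain ⟨c, hc, hscale⟩ := exists_discountedSum_betaOrbit_eq_mul hβ
    rw [hscale g hg₀] at hne
    rw [hscale f hf₀, hscale g hg₀, mul_div_mul_left _ _ hc]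
    have hleft : ∀ n, Tendsto (betaOrbit · n) (𝓝[<] β) (𝓝 (quasiGreedyOrbit β n)) := fun n =>
      (tendsto_betaOrbit_nhdsLT hβ₀ n).mono_right nhdsWithin_le_nhds
    exact (tendsto_discountedSum_comp_betaOrbit hβ nhdsWithin_le_nhds hleft hf).div
      (tendsto_discountedSum_comp_betaOrbit hβ nhdsWithin_le_nhds hleft hg)
      (right_ne_zero_of_mul hne)
  · have hright : ∀ n, Tendsto (betaOrbit · n) (𝓝[≥] β) (𝓝 (betaOrbit β n)) := fun n =>
      (tendsto_betaOrbit_nhdsGE hβ₀.le n).mono_right nhdsWithin_le_nhds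
    exact (tendsto_discountedSum_comp_betaOrbit hβ nhdsWithin_le_nhds hright hf).div
      (tendsto_discountedSum_comp_betaOrbit hβ nhdsWithin_le_nhds hright hg) hne

lemma discountedSum_comp_betaOrbit_pos (hβ : 1 < β) (hg : Continuous g)
    (hg₀ : ∀ x, 0 ≤ x → 0 ≤ g x) (hg₁ : 0 < g 1) : 0 < discountedSum β (g ∘ betaOrbit β) := by
  obtain ⟨C, hC⟩ := exists_norm_comp_betaOrbit_le hg
  exact discountedSum_pos hβ (hC β) (fun n => hg₀ _ (betaOrbit_mem_Icc β n).1) hg₁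

lemma Ebeta_eq_discountedSum_div_discountedSum (β : ℝ) :
    Ebeta β = discountedSum β ((fun x => x ^ 2 / 2) ∘ betaOrbit β) /
      discountedSum β (id ∘ betaOrbit β) := by
  simp only [Ebeta, discountedSum, Function.comp_apply, id, div_div]

lemma Ebeta_pos (hβ : 1 < β) : 0 < Ebeta β := by
  rw [Ebeta_eq_discountedSum_div_discountedSum]
  exact div_pos
    (discountedSum_comp_betaOrbit_pos hβ (by fun_prop) (fun x _ => by positivity) (by norm_num))
    (discountedSum_comp_betaOrbit_pos hβ continuous_id (fun _ => id) one_pos)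

theorem continuousOn_Ebeta : ContinuousOn Ebeta (Ioi 1) := by
  rw [funext Ebeta_eq_discountedSum_div_discountedSum]
  intro β hβ
  have hpos : 0 < discountedSum β (id ∘ betaOrbit β) :=
    discountedSum_comp_betaOrbit_pos hβ continuous_id (fun _ => id) one_pos
  exact (continuousAt_discountedSum_div_discountedSum hβ (by fun_prop) continuous_id (by simp) rfl
    hpos.ne').continuousWithinAt

end Continuity

theorem stmt6_general (F : ℝ → ℝ) (hF : Continuous F) (ε : ℝ) :
    ContinuousOn (psi ε F) (Ioi 1) := by
  have hinv : ContinuousOn (fun β => 1 / Ebeta β - 2) (Ioi 1) :=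
    (continuousOn_const.div continuousOn_Ebeta fun _ hβ => (Ebeta_pos hβ).ne').sub
      continuousOn_const
  exact continuousOn_const.add (continuousOn_const.mul (hF.comp_continuousOn hinv))

/-- `ψ^ε` is continuous on `[2,∞)` whenever `F` is continuous. -/
theorem stmt6 (F : ℝ → ℝ) (hF : Continuous F) (ε : ℝ) (hε : 0 ≤ ε) :
    ContinuousOn (psi ε F) (Set.Ici (2:ℝ)) := by
  exact (stmt6_general F hF ε).mono (Ici_subset_Ioi.2 one_lt_two)
end

section
/- For every C > 0 and every δ > 0 there exists β with 2 < β < 2 + δ such that 1/2 − E(β) > C·(β − 2). Equivalently, there is a sequence β_k → 2⁺ and constants c_k → ∞ with |E(β_k) − 1/2| > c_k·|β_k − 2|; in particular β ↦ E(β) is not Lipschitz continuous at β = 2. -/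
/-!
With `t_n = betaOrbit β n`, the gap `1/2 - E(β)` is the series `∑ t_n (1 - t_n) / (2βⁿ)` of
nonnegative terms divided by the mass of the Parry density. When `β` is slightly above an integer
`m`, the orbit of `1` starts with `t_{n+1} = (β - m) βⁿ`, so as long as `t_{n+1} ≤ 1/2` the factor
`βⁿ` cancels and each of these terms is at least `(β - m) / (4β)`. The number of such terms tends to
infinity as `β → m⁺`, so the gap is not `O(β - m)`.
-/

open Filter Topology

/-- The total mass `∑ t_n(β)/βⁿ` of the unnormalized Parry density `h_β`, that is, the denominator
of `Ebeta β`. -/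
noncomputable def parryMass (β : ℝ) : ℝ :=
  ∑' n : ℕ, betaOrbit β n / β ^ n

theorem betaOrbit_nonneg (β : ℝ) (n : ℕ) : 0 ≤ betaOrbit β n := by
  cases n with
  | zero => exact zero_le_one
  | succ n => exact Int.fract_nonneg _

theorem betaOrbit_le_one (β : ℝ) (n : ℕ) : betaOrbit β n ≤ 1 := by
  cases n with
  | zero => exact le_rfl
  | succ n => exact (Int.fract_lt_one _).le

theorem betaOrbit_succ_eq_fract_mul_pow {β : ℝ} (hβ : 1 ≤ β) {n : ℕ}
    (h : Int.fract β * β ^ n < 1) : betaOrbit β (n + 1) = Int.fract β * β ^ n := by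
  induction n with
  | zero => simp only [betaOrbit, mul_one, pow_zero]
  | succ n ih =>
    have h_prev : Int.fract β * β ^ n < 1 :=
      lt_of_le_of_lt (mul_le_mul_of_nonneg_left (pow_le_pow_right₀ hβ n.le_succ)
        (Int.fract_nonneg β)) h
    calc betaOrbit β (n + 2) = Int.fract (β * betaOrbit β (n + 1)) := rfl
      _ = Int.fract (Int.fract β * β ^ (n + 1)) := by rw [ih h_prev, pow_succ]; ring_nf
      _ = Int.fract β * β ^ (n + 1) :=
        Int.fract_eq_self.2 ⟨mul_nonneg (Int.fract_nonneg β) (by positivity), h⟩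

section Gap

variable {β : ℝ}

theorem betaOrbit_div_pow_nonneg (hβ : 0 ≤ β) (n : ℕ) : 0 ≤ betaOrbit β n / β ^ n :=
  div_nonneg (betaOrbit_nonneg β n) (pow_nonneg hβ n)

theorem betaOrbit_div_pow_le (hβ : 0 ≤ β) (n : ℕ) : betaOrbit β n / β ^ n ≤ β⁻¹ ^ n := by
  rw [inv_pow, ← one_div]
  exact div_le_div_of_nonneg_right (betaOrbit_le_one β n) (pow_nonneg hβ n)

theorem summable_betaOrbit_div_pow (hβ : 1 < β) : Summable fun n => betaOrbit β n / β ^ n :=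
  have hβ₀ : 0 ≤ β := by linarith
  .of_nonneg_of_le (betaOrbit_div_pow_nonneg hβ₀) (betaOrbit_div_pow_le hβ₀)
    (summable_geometric_of_lt_one (inv_nonneg.2 hβ₀) (inv_lt_one_of_one_lt₀ hβ))

theorem summable_betaOrbit_sq_div_pow (hβ : 1 < β) :
    Summable fun n => betaOrbit β n ^ 2 / (2 * β ^ n) := by
  refine .of_nonneg_of_le (fun n => by positivity) (fun n => ?_) (summable_betaOrbit_div_pow hβ)
  have h_sq : betaOrbit β n ^ 2 ≤ betaOrbit β n :=
    pow_le_of_le_one (betaOrbit_nonneg β n) (betaOrbit_le_one β n) two_ne_zero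
  have h_pow : 0 < β ^ n := by positivity
  exact div_le_div₀ (betaOrbit_nonneg β n) h_sq h_pow (by linarith)

theorem one_le_parryMass (hβ : 1 < β) : 1 ≤ parryMass β := by
  have h_first : betaOrbit β 0 / β ^ 0 ≤ parryMass β :=
    (summable_betaOrbit_div_pow hβ).le_tsum 0 fun n _ => betaOrbit_div_pow_nonneg (by linarith) n
  simpa [betaOrbit] using h_first

theorem parryMass_le (hβ : 1 < β) : parryMass β ≤ β / (β - 1) := by
  have hβ₀ : 0 ≤ β := by linarith
  have h_ratio : β⁻¹ < 1 := inv_lt_one_of_one_lt₀ hβ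
  calc parryMass β ≤ ∑' n : ℕ, β⁻¹ ^ n :=
        (summable_betaOrbit_div_pow hβ).tsum_le_tsum (betaOrbit_div_pow_le hβ₀)
          (summable_geometric_of_lt_one (inv_nonneg.2 hβ₀) h_ratio)
    _ = (1 - β⁻¹)⁻¹ := tsum_geometric_of_lt_one (inv_nonneg.2 hβ₀) h_ratio
    _ = β / (β - 1) := by
      rw [← one_div_div, sub_div, div_self (by positivity), one_div, one_div]

theorem hasSum_half_sub_Ebeta_mul_parryMass (hβ : 1 < β) :
    HasSum (fun n => betaOrbit β n * (1 - betaOrbit β n) / (2 * β ^ n))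
      ((1 / 2 - Ebeta β) * parryMass β) := by
  have h_mass : parryMass β ≠ 0 := (zero_lt_one.trans_le (one_le_parryMass hβ)).ne'
  have h_moment : Ebeta β * parryMass β = ∑' n, betaOrbit β n ^ 2 / (2 * β ^ n) :=
    div_mul_cancel₀ _ h_mass
  rw [sub_mul, h_moment]
  refine (((summable_betaOrbit_div_pow hβ).hasSum.mul_left (1 / 2)).sub
    (summable_betaOrbit_sq_div_pow hβ).hasSum).congr_fun fun n => ?_
  field_simp

theorem betaOrbit_mul_one_sub_div_pow_nonneg (hβ : 0 ≤ β) (n : ℕ) :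
    0 ≤ betaOrbit β n * (1 - betaOrbit β n) / (2 * β ^ n) :=
  div_nonneg (mul_nonneg (betaOrbit_nonneg β n) (sub_nonneg.2 (betaOrbit_le_one β n)))
    (by positivity)

theorem Ebeta_le_half (hβ : 1 < β) : Ebeta β ≤ 1 / 2 := by
  have h_prod : 0 ≤ (1 / 2 - Ebeta β) * parryMass β :=
    (hasSum_half_sub_Ebeta_mul_parryMass hβ).nonneg
      (betaOrbit_mul_one_sub_div_pow_nonneg (by linarith))
  exact sub_nonneg.1 (nonneg_of_mul_nonneg_left h_prod
    (zero_lt_one.trans_le (one_le_parryMass hβ)))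

theorem fract_div_le_betaOrbit_mul_one_sub_div_pow (hβ : 1 ≤ β) {n : ℕ}
    (h : Int.fract β * β ^ n ≤ 1 / 2) :
    Int.fract β / (4 * β) ≤
      betaOrbit β (n + 1) * (1 - betaOrbit β (n + 1)) / (2 * β ^ (n + 1)) := by
  have h_cancel : Int.fract β * β ^ n * (1 - Int.fract β * β ^ n) / (2 * β ^ (n + 1)) =
      Int.fract β * (1 - Int.fract β * β ^ n) / (2 * β) := by
    rw [pow_succ]
    field_simp
  calc Int.fract β / (4 * β) = Int.fract β * (1 / 2) / (2 * β) := by ring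
    _ ≤ Int.fract β * (1 - Int.fract β * β ^ n) / (2 * β) := by
      refine div_le_div_of_nonneg_right ?_ (by positivity)
      exact mul_le_mul_of_nonneg_left (by linarith) (Int.fract_nonneg β)
    _ = betaOrbit β (n + 1) * (1 - betaOrbit β (n + 1)) / (2 * β ^ (n + 1)) := by
      rw [betaOrbit_succ_eq_fract_mul_pow hβ (by linarith), h_cancel]

theorem natCast_mul_fract_le_half_sub_Ebeta (hβ : 1 < β) {K : ℕ}
    (hK : Int.fract β * β ^ K ≤ 1 / 2) :
    K * ((β - 1) / (4 * β ^ 2)) * Int.fract β ≤ 1 / 2 - Ebeta β := by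
  have h_term (n : ℕ) (hn : n ∈ Finset.range K) : Int.fract β / (4 * β) ≤
      betaOrbit β (n + 1) * (1 - betaOrbit β (n + 1)) / (2 * β ^ (n + 1)) :=
    fract_div_le_betaOrbit_mul_one_sub_div_pow hβ.le <| hK.trans' <| mul_le_mul_of_nonneg_left
      (pow_le_pow_right₀ hβ.le (Finset.mem_range.1 hn).le) (Int.fract_nonneg β)
  have h_mass : K * (Int.fract β / (4 * β)) ≤ (1 / 2 - Ebeta β) * (β / (β - 1)) :=
    calc K * (Int.fract β / (4 * β))
        ≤ ∑ n ∈ Finset.range K,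
            betaOrbit β (n + 1) * (1 - betaOrbit β (n + 1)) / (2 * β ^ (n + 1)) := by
          simpa only [Finset.card_range, nsmul_eq_mul] using Finset.card_nsmul_le_sum _ _ _ h_term
      _ ≤ ∑ n ∈ Finset.range (K + 1), betaOrbit β n * (1 - betaOrbit β n) / (2 * β ^ n) := by
          rw [Finset.sum_range_succ']
          exact le_add_of_nonneg_right (betaOrbit_mul_one_sub_div_pow_nonneg (by linarith) 0)
      _ ≤ (1 / 2 - Ebeta β) * parryMass β :=
          sum_le_hasSum _ (fun n _ => betaOrbit_mul_one_sub_div_pow_nonneg (by linarith) n)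
            (hasSum_half_sub_Ebeta_mul_parryMass hβ)
      _ ≤ (1 / 2 - Ebeta β) * (β / (β - 1)) :=
          mul_le_mul_of_nonneg_left (parryMass_le hβ) (sub_nonneg.2 (Ebeta_le_half hβ))
  have hβ₁ : 0 < β - 1 := sub_pos.2 hβ
  calc K * ((β - 1) / (4 * β ^ 2)) * Int.fract β
      = K * (Int.fract β / (4 * β)) / (β / (β - 1)) := by field_simp
    _ ≤ 1 / 2 - Ebeta β := (div_le_iff₀ (by positivity)).2 h_mass

end Gap

theorem stmt8_general {m : ℕ} (hm : 2 ≤ m) :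
    Tendsto (fun β : ℝ => (1 / 2 - Ebeta β) / (β - m)) (𝓝[>] (m : ℝ)) atTop := by
  have hm₁ : (1 : ℝ) < m := by exact_mod_cast hm
  refine tendsto_atTop.2 fun C => ?_
  obtain ⟨K, hK⟩ : ∃ K : ℕ, C < K * ((m - 1) / (4 * m ^ 2)) := by
    have h_coeff : 0 < ((m : ℝ) - 1) / (4 * m ^ 2) := div_pos (sub_pos.2 hm₁) (by positivity)
    obtain ⟨K, hK⟩ := exists_nat_gt (C / ((m - 1) / (4 * m ^ 2)))
    exact ⟨K, (div_lt_iff₀ h_coeff).1 hK⟩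
  have h_coeff : ∀ᶠ β : ℝ in 𝓝 (m : ℝ), C < K * ((β - 1) / (4 * β ^ 2)) := by
    have h_cont : ContinuousAt (fun β : ℝ => K * ((β - 1) / (4 * β ^ 2))) m := by
      fun_prop (disch := positivity)
    exact h_cont.eventually_const_lt hK
  have h_small : ∀ᶠ β : ℝ in 𝓝 (m : ℝ), (β - m) * β ^ K < 1 / 2 := by
    have h_cont : ContinuousAt (fun β : ℝ => (β - m) * β ^ K) m := by fun_prop
    exact h_cont.eventually_lt_const (by norm_num)
  filter_upwards [h_coeff.filter_mono nhdsWithin_le_nhds, h_small.filter_mono nhdsWithin_le_nhds,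
    Ioo_mem_nhdsGT (lt_add_one (m : ℝ))] with β hβC hβK hβm
  have h_fract : Int.fract β = β - m :=
    Int.fract_eq_iff.2 ⟨by linarith [hβm.1], by linarith [hβm.2], m, by simp⟩
  have h_gap : K * ((β - 1) / (4 * β ^ 2)) * Int.fract β ≤ 1 / 2 - Ebeta β :=
    natCast_mul_fract_le_half_sub_Ebeta (hm₁.trans hβm.1) (h_fract ▸ hβK.le)
  rw [h_fract] at h_gap
  exact hβC.le.trans ((le_div_iff₀ (sub_pos.2 hβm.1)).2 h_gap)

/-- `β ↦ E(β)` is not Lipschitz at `β = 2`: for every `C > 0` there are `β`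
arbitrarily close to `2` with `1/2 − E(β) > C (β − 2)`. -/
theorem stmt8 (C : ℝ) (hC : 0 < C) (δ : ℝ) (hδ : 0 < δ) :
    ∃ β : ℝ, 2 < β ∧ β < 2 + δ ∧ C * (β - 2) < 1/2 - Ebeta β := by
  have h_slope : ∀ᶠ β : ℝ in 𝓝[>] 2, C < (1 / 2 - Ebeta β) / (β - 2) := by
    simpa only [Nat.cast_ofNat] using (stmt8_general le_rfl).eventually_gt_atTop C
  obtain ⟨β, hβC, hβ₂, hβδ⟩ :=
    (h_slope.and (Ioo_mem_nhdsGT (lt_add_of_pos_right 2 hδ))).exists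
  exact ⟨β, hβ₂, hβδ, (lt_div_iff₀ (sub_pos.2 hβ₂)).1 hβC⟩
end

section
/- Fix an integer k ≥ 1 and let x_k = 2^k(2^k − 1)/(2^{2k} − 1) ∈ (0,1), the point whose binary expansion is the repeating block of k ones followed by k zeros. Let T(x) = 2x mod 1 be the doubling map and let μ_k = (1/(2k)) ∑_{j=0}^{2k−1} δ_{T^j(x_k)} be the uniform measure on the orbit of x_k. Then T^{2k}(x_k) = x_k, the orbit is symmetric about 1/2 (if y lies on the orbit then so does 1 − y), E_{μ_k} = 1/2, and for every ε ≥ 0 and every F : ℝ → ℝ with F(0) = 0, μ_k is an invariant measure of the self-consistent system: (T_{μ_k}^ε)_*μ_k = μ_k. -/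
open MeasureTheory

/-- Lebesgue measure on the interval `[0,1]`. -/
noncomputable def lebI : Measure ℝ := volume.restrict (Set.Icc 0 1)

/-- `E_μ = ∫₀¹ x dμ(x)`. -/
noncomputable def Emu (μ : Measure ℝ) : ℝ := ∫ x in Set.Icc (0:ℝ) 1, x ∂μ

/-- The self-consistent dynamics `T_μ^ε(x) = (2 + ε F(1/E_μ − 2)) x mod 1`. -/
noncomputable def Tsc (ε : ℝ) (F : ℝ → ℝ) (μ : Measure ℝ) (x : ℝ) : ℝ :=
  Int.fract ((2 + ε * F (1 / Emu μ - 2)) * x)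

open scoped ENNReal

/-!
On the circle `ℝ / ℤ`, the doubling map `T` commutes with the reflection `x ↦ -x`. Since
`x_k = 2^k / (2^k + 1)`, the number `2^k x_k + x_k` is an integer, so `T^k` reflects `x_k`;
hence `T^k` reflects every point of the orbit, and `T^(2k)` fixes `x_k`. By periodicity the orbit
avoids the fixed point `0`, where the reflection is not `y ↦ 1 - y`, so it splits into pairs
`{y, 1 - y}` and has mean `1/2`. At mean `1/2` the feedback term is `F 0 = 0`, and the
self-consistent map is the doubling map itself.
-/

section Birkhoff

variable {α M : Type*} [AddCommMonoid M] {f : α → α} {x : α}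

lemma birkhoffSum_apply_of_isPeriodicPt {n : ℕ} (hx : Function.IsPeriodicPt f n x) (g : α → M) :
    birkhoffSum f g n (f x) = birkhoffSum f g n x := by
  cases n with
  | zero => simp only [birkhoffSum_zero]
  | succ m =>
    rw [birkhoffSum_succ, birkhoffSum_succ', ← Function.iterate_succ_apply, hx, add_comm]

lemma birkhoffSum_two_mul_of_add_eq {k : ℕ} {g : α → M} {c : M}
    (hg : ∀ j < k, g (f^[j] x) + g (f^[k + j] x) = c) :
    birkhoffSum f g (2 * k) x = k • c := by
  calc birkhoffSum f g (2 * k) x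
      = ∑ j ∈ Finset.range k, (g (f^[j] x) + g (f^[k + j] x)) := by
        rw [birkhoffSum, two_mul, Finset.sum_range_add, Finset.sum_add_distrib]
    _ = k • c := by
        rw [Finset.sum_congr rfl fun j hj => hg j (Finset.mem_range.1 hj), Finset.sum_const,
          Finset.card_range]

end Birkhoff

lemma iterate_ne_of_mem_periodicPts {α : Type*} {f : α → α} {x y : α}
    (hx : x ∈ Function.periodicPts f) (hy : Function.IsFixedPt f y) (hxy : x ≠ y) (j : ℕ) :
    f^[j] x ≠ y := by
  intro hj
  have hfix : Function.IsFixedPt f x :=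
    Function.isPeriodicPt_of_mem_periodicPts_of_isPeriodicPt_iterate (m := 1) hx (hj ▸ hy)
  exact hxy ((hfix.iterate j).symm.trans hj)

section EmpiricalMeasure

variable {α : Type*} [MeasurableSpace α] {f : α → α} {n : ℕ} {x : α}

/-- The empirical measure `(1/n) ∑_{j < n} δ_{f^j x}` of the first `n` points of the orbit of `x`.
It is the uniform measure on the orbit when `x` has minimal period `n`. -/
noncomputable def empiricalMeasure (f : α → α) (n : ℕ) (x : α) : Measure α :=
  (n : ℝ≥0∞)⁻¹ • birkhoffSum f Measure.dirac n x

lemma measurePreserving_empiricalMeasure (hf : Measurable f) (hx : Function.IsPeriodicPt f n x) :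
    MeasurePreserving f (empiricalMeasure f n x) (empiricalMeasure f n x) := by
  refine ⟨hf, ?_⟩
  have hshift : (birkhoffSum f Measure.dirac n x).map f = birkhoffSum f Measure.dirac n (f x) := by
    simp only [birkhoffSum, ← Measure.mapₗ_apply_of_measurable hf, map_sum]
    simp only [Measure.mapₗ_apply_of_measurable hf, Measure.map_dirac' hf,
      ← Function.iterate_succ_apply, ← Function.iterate_succ_apply']
  rw [empiricalMeasure, Measure.map_smul, hshift, birkhoffSum_apply_of_isPeriodicPt hx]

variable [MeasurableSingletonClass α]

lemma integral_empiricalMeasure {E : Type*} [NormedAddCommGroup E] [NormedSpace ℝ E]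
    [CompleteSpace E] (g : α → E) :
    ∫ y, g y ∂empiricalMeasure f n x = birkhoffAverage ℝ f g n x := by
  rw [empiricalMeasure, birkhoffSum, integral_smul_measure,
    integral_finsetSum_measure fun _ _ => integrable_dirac enorm_lt_top]
  simp only [integral_dirac, birkhoffAverage, birkhoffSum, ENNReal.toReal_inv,
    ENNReal.toReal_natCast]

lemma ae_empiricalMeasure {p : α → Prop} (hp : ∀ j < n, p (f^[j] x)) :
    ∀ᵐ y ∂empiricalMeasure f n x, p y := by
  refine Measure.ae_smul_measure (ae_finsetSum_measure_iff.2 fun j hj => ?_) _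
  rw [ae_dirac_eq]
  exact hp j (Finset.mem_range.1 hj)

end EmpiricalMeasure

lemma Emu_empiricalMeasure {f : ℝ → ℝ} {n : ℕ} {x : ℝ}
    (hx : ∀ j < n, f^[j] x ∈ Set.Icc (0 : ℝ) 1) :
    Emu (empiricalMeasure f n x) = birkhoffAverage ℝ f id n x := by
  rw [Emu, Measure.restrict_eq_self_of_ae_mem (ae_empiricalMeasure hx)]
  exact integral_empiricalMeasure id

/-- The doubling map `x ↦ 2x mod 1`, defined on all of `ℝ` with values in `[0, 1)`. -/
noncomputable def doublingMap (x : ℝ) : ℝ := Int.fract (2 * x)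

lemma measurable_doublingMap : Measurable doublingMap :=
  measurable_fract.comp (measurable_const_mul 2)

lemma mapsTo_doublingMap_Ico : Set.MapsTo doublingMap (Set.Ico 0 1) (Set.Ico 0 1) :=
  fun _ _ => ⟨Int.fract_nonneg _, Int.fract_lt_one _⟩

lemma isFixedPt_doublingMap_zero : Function.IsFixedPt doublingMap 0 := by
  rw [Function.IsFixedPt, doublingMap, mul_zero, Int.fract_zero]

lemma doublingMap_fract (x : ℝ) : doublingMap (Int.fract x) = Int.fract (2 * x) := by
  rw [doublingMap, Int.fract_eq_fract]
  exact ⟨-2 * ⌊x⌋, by rw [Int.fract]; push_cast; ring⟩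

lemma iterate_doublingMap_fract (j : ℕ) (x : ℝ) :
    doublingMap^[j] (Int.fract x) = Int.fract (2 ^ j * x) := by
  have hsemi : Function.Semiconj Int.fract (2 * · : ℝ → ℝ) doublingMap :=
    fun y => (doublingMap_fract y).symm
  rw [← hsemi.iterate_right j x, mul_left_iterate]

lemma commute_fract_neg_doublingMap :
    Function.Commute (fun x : ℝ => Int.fract (-x)) doublingMap := by
  intro x
  rw [doublingMap_fract, doublingMap, Int.fract_eq_fract]
  exact ⟨⌊2 * x⌋, by rw [Int.fract]; ring⟩

section ReflectedOrbit

variable {k : ℕ} {x : ℝ}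

lemma iterate_add_doublingMap_eq_fract_neg (hrefl : doublingMap^[k] x = Int.fract (-x)) (j : ℕ) :
    doublingMap^[k + j] x = Int.fract (-doublingMap^[j] x) := by
  rw [add_comm, Function.iterate_add_apply, hrefl]
  exact (commute_fract_neg_doublingMap.iterate_right j x).symm

lemma isPeriodicPt_doublingMap_of_iterate_eq_fract_neg (hx : x ∈ Set.Ico (0 : ℝ) 1)
    (hrefl : doublingMap^[k] x = Int.fract (-x)) :
    Function.IsPeriodicPt doublingMap (2 * k) x := by
  calc doublingMap^[2 * k] x
      = Int.fract (-Int.fract (-x)) := by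
        rw [two_mul, iterate_add_doublingMap_eq_fract_neg hrefl, hrefl]
    _ = Int.fract x := Int.fract_eq_fract.2 ⟨⌊-x⌋, by rw [Int.fract]; ring⟩
    _ = x := Int.fract_eq_self.2 hx

lemma iterate_add_doublingMap_eq_one_sub (hk : 0 < k) (hx : x ∈ Set.Ioo (0 : ℝ) 1)
    (hrefl : doublingMap^[k] x = Int.fract (-x)) (j : ℕ) :
    doublingMap^[k + j] x = 1 - doublingMap^[j] x := by
  have hIco : x ∈ Set.Ico (0 : ℝ) 1 := Set.Ioo_subset_Ico_self hx
  have hper : x ∈ Function.periodicPts doublingMap :=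
    Function.mk_mem_periodicPts (by positivity)
      (isPeriodicPt_doublingMap_of_iterate_eq_fract_neg hIco hrefl)
  have hne : doublingMap^[j] x ≠ 0 :=
    iterate_ne_of_mem_periodicPts hper isFixedPt_doublingMap_zero hx.1.ne' j
  have hfract : Int.fract (doublingMap^[j] x) = doublingMap^[j] x :=
    Int.fract_eq_self.2 (mapsTo_doublingMap_Ico.iterate j hIco)
  rw [iterate_add_doublingMap_eq_fract_neg hrefl, Int.fract_neg (hfract.symm ▸ hne), hfract]

lemma Emu_empiricalMeasure_of_iterate_eq_fract_neg (hk : 0 < k) (hx : x ∈ Set.Ioo (0 : ℝ) 1)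
    (hrefl : doublingMap^[k] x = Int.fract (-x)) :
    Emu (empiricalMeasure doublingMap (2 * k) x) = 1 / 2 := by
  have hmem (j : ℕ) : doublingMap^[j] x ∈ Set.Icc (0 : ℝ) 1 :=
    Set.Ico_subset_Icc_self (mapsTo_doublingMap_Ico.iterate j (Set.Ioo_subset_Ico_self hx))
  have hpair (j : ℕ) : id (doublingMap^[j] x) + id (doublingMap^[k + j] x) = 1 := by
    rw [iterate_add_doublingMap_eq_one_sub hk hx hrefl, id, id, add_sub_cancel]
  rw [Emu_empiricalMeasure fun j _ => hmem j, birkhoffAverage,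
    birkhoffSum_two_mul_of_add_eq fun j _ => hpair j, nsmul_one, smul_eq_mul]
  push_cast
  field_simp

end ReflectedOrbit

/-- The point `x_k` whose binary expansion repeats the block of `k` ones followed by `k` zeros;
for `k = 0` the quotient is `0 / 0 = 0`. -/
noncomputable def blockPoint (k : ℕ) : ℝ := 2 ^ k * (2 ^ k - 1) / (2 ^ (2 * k) - 1)

section BlockPoint

variable {k : ℕ}

lemma blockPoint_eq (hk : k ≠ 0) : blockPoint k = 2 ^ k / (2 ^ k + 1) := by
  have hfactor : (2 : ℝ) ^ (2 * k) - 1 = (2 ^ k + 1) * (2 ^ k - 1) := by ring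
  have hne : (2 : ℝ) ^ k - 1 ≠ 0 := (sub_pos.2 (one_lt_pow₀ one_lt_two hk)).ne'
  rw [blockPoint, hfactor, mul_div_mul_right _ _ hne]

lemma blockPoint_mem_Ioo (hk : k ≠ 0) : blockPoint k ∈ Set.Ioo (0 : ℝ) 1 := by
  rw [blockPoint_eq hk]
  exact ⟨by positivity, (div_lt_one (by positivity)).2 (lt_add_one _)⟩

lemma iterate_doublingMap_blockPoint (hk : k ≠ 0) :
    doublingMap^[k] (blockPoint k) = Int.fract (-blockPoint k) := by
  have hfract : Int.fract (blockPoint k) = blockPoint k :=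
    Int.fract_eq_self.2 (Set.Ioo_subset_Ico_self (blockPoint_mem_Ioo hk))
  have hint : 2 ^ k * blockPoint k - -blockPoint k = ((2 ^ k : ℤ) : ℝ) := by
    rw [blockPoint_eq hk]
    push_cast
    field_simp
    ring
  calc doublingMap^[k] (blockPoint k)
      = doublingMap^[k] (Int.fract (blockPoint k)) := by rw [hfract]
    _ = Int.fract (2 ^ k * blockPoint k) := iterate_doublingMap_fract k _
    _ = Int.fract (-blockPoint k) := Int.fract_eq_fract.2 ⟨2 ^ k, hint⟩

end BlockPoint

section SelfConsistent

variable {μ : Measure ℝ} {F : ℝ → ℝ}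

lemma Tsc_eq_doublingMap_of_Emu_eq_half (hE : Emu μ = 1 / 2) (hF : F 0 = 0) (ε : ℝ) :
    Tsc ε F μ = doublingMap := by
  funext x
  rw [Tsc, doublingMap, hE, one_div_one_div, sub_self, hF, mul_zero, add_zero]

lemma measurePreserving_Tsc_of_Emu_eq_half (hμ : MeasurePreserving doublingMap μ μ)
    (hE : Emu μ = 1 / 2) (hF : F 0 = 0) (ε : ℝ) : MeasurePreserving (Tsc ε F μ) μ μ := by
  rwa [Tsc_eq_doublingMap_of_Emu_eq_half hE hF]

end SelfConsistent

/-- The uniform measure on the doubling-map orbit of the point with binary expansion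
consisting of the repeating block of `k` ones followed by `k` zeros is symmetric about
`1/2`, has expectation `1/2`, and is invariant for the self-consistent system. -/
theorem stmt18 (k : ℕ) (hk : 1 ≤ k) :
    let T : ℝ → ℝ := fun x => Int.fract (2 * x)
    let x₀ : ℝ := 2 ^ k * (2 ^ k - 1) / (2 ^ (2 * k) - 1)
    let μ : Measure ℝ := ((2 * k : ℕ) : ℝ≥0∞)⁻¹ •
      ∑ j ∈ Finset.range (2 * k), Measure.dirac (T^[j] x₀)
    x₀ ∈ Set.Ioo (0:ℝ) 1 ∧
    T^[2 * k] x₀ = x₀ ∧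
    (∀ j < 2 * k, ∃ i < 2 * k, T^[i] x₀ = 1 - T^[j] x₀) ∧
    Emu μ = 1/2 ∧
    ∀ ε : ℝ, 0 ≤ ε → ∀ F : ℝ → ℝ, F 0 = 0 →
      Measure.map (Tsc ε F μ) μ = μ := by
  intro T x₀ μ
  have hx : x₀ ∈ Set.Ioo (0 : ℝ) 1 := blockPoint_mem_Ioo (by omega)
  have hrefl : T^[k] x₀ = Int.fract (-x₀) := iterate_doublingMap_blockPoint (by omega)
  have hper : Function.IsPeriodicPt T (2 * k) x₀ :=
    isPeriodicPt_doublingMap_of_iterate_eq_fract_neg (Set.Ioo_subset_Ico_self hx) hrefl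
  have hsymm : ∀ j, T^[k + j] x₀ = 1 - T^[j] x₀ := iterate_add_doublingMap_eq_one_sub hk hx hrefl
  have hE : Emu μ = 1 / 2 := Emu_empiricalMeasure_of_iterate_eq_fract_neg hk hx hrefl
  have hμ : MeasurePreserving T μ μ :=
    measurePreserving_empiricalMeasure measurable_doublingMap hper
  refine ⟨hx, hper, fun j _ => ?_, hE, fun ε _ F hF =>
    (measurePreserving_Tsc_of_Emu_eq_half hμ hE hF ε).map_eq⟩
  exact ⟨(k + j) % (2 * k), Nat.mod_lt _ (by omega), (hper.iterate_mod_apply _).trans (hsymm j)⟩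
end
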